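/- Let (k,′) be a differential field of characteristic zero, α, β ∈ kˣ, Q = (α,β)_k, and d a derivation on Q restricting to ′ on k. Then d becomes standard over some finite field extension of k (i.e., there is a finite differential field extension (L,′) of (k,′) such that d* is a standard derivation on Q⊗_k L) if and only if (Q,d) is split by some finite differential field extension of (k,′). -/

import Mathlib

open scoped TensorProduct

/-- A derivation on a (possibly noncommutative) ring: an additive map satisfying the
Leibniz rule. -/
structure IsRingDeriv {A : Type*} [Ring A] (d : A → A) : Prop where
  map_add : ∀ x y, d (x + y) = d x + d y
  leibniz : ∀ x y, d (x * y) = d x * y + x * d y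

/-- The derivation `d` on the `k`-algebra `A` restricts to the derivation `δ` on `k`
(along `algebraMap k A`). -/
def RestrictsTo {k A : Type*} [CommRing k] [Ring A] [Algebra k A]
    (δ : k → k) (d : A → A) : Prop :=
  ∀ c : k, d (algebraMap k A c) = algebraMap k A (δ c)

/-- The differential algebra `(Q, d)` over `(k, δk)` is split by the differential field
`(L, δL)`: there is an `L`-algebra isomorphism `L ⊗[k] Q ≃ M₂(L)` intertwining the
induced derivation `d* = δL ⊗ id + id ⊗ d` with the coordinate-wise derivation on `M₂(L)`. -/
def DiffSplits (k : Type*) [Field k] (Q : Type*) [Ring Q] [Algebra k Q]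
    (d : Q → Q) (L : Type*) [Field L] [Algebra k L] (δL : L → L) : Prop :=
  ∃ D : L ⊗[k] Q → L ⊗[k] Q,
    IsRingDeriv D ∧
    (∀ (y : L) (x : Q), D (y ⊗ₜ[k] x) = δL y ⊗ₜ[k] x + y ⊗ₜ[k] d x) ∧
    ∃ φ : (L ⊗[k] Q) ≃ₐ[L] Matrix (Fin 2) (Fin 2) L,
      ∀ z, φ (D z) = (φ z).map δL

universe u

/-!
If `w₁, w₂` make `D` standard, adjoin square roots of `w₁²` and `w₂²`: this is a finite extension,
separable outside characteristic two, so the derivation extends to it. After rescaling,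
`w₁² = w₂² = 1`, and an eigenvector `w` of a derivation with `w² = 1` is a constant, since
`0 = (w²)' = 2 w w'`. The idempotent `e = (1 + w₁) / 2` satisfies `e w₂ e = 0`, so `e` and `w₂`
generate a system of `2 × 2` matrix units consisting of constants, which is a differential
splitting.

Conversely, a differential splitting makes `diag(1, -1)` and the swap matrix constants. They are
anticommuting involutions of trace zero, and the matrices of trace zero correspond to the pure
quaternions because each of `u`, `v`, `uv` anticommutes with a unit.
-/

section Constants

variable {A : Type*} [Ring A] {D : A → A}

namespace IsRingDeriv

/-- A ring derivation as a homomorphism of additive groups. -/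
def toAddMonoidHom (hD : IsRingDeriv D) : A →+ A :=
  AddMonoidHom.mk' D hD.map_add

protected theorem map_zero (hD : IsRingDeriv D) : D 0 = 0 :=
  hD.toAddMonoidHom.map_zero

protected theorem map_one (hD : IsRingDeriv D) : D 1 = 0 := by
  simpa using hD.leibniz 1 1

/-- The ring of constants of a derivation. -/
def constants (hD : IsRingDeriv D) : Subring A where
  __ := hD.toAddMonoidHom.ker
  one_mem' := hD.map_one
  mul_mem' {x y} (hx : D x = 0) (hy : D y = 0) := by
    change D (x * y) = 0
    rw [hD.leibniz, hx, hy, zero_mul, mul_zero, add_zero]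

theorem mem_constants_iff (hD : IsRingDeriv D) {x : A} : x ∈ hD.constants ↔ D x = 0 :=
  Iff.rfl

theorem mem_constants_of_mul_mem (hD : IsRingDeriv D) {a x : A} (ha : IsUnit a)
    (ha_const : a ∈ hD.constants) (hax : a * x ∈ hD.constants) : x ∈ hD.constants := by
  rw [mem_constants_iff] at ha_const hax ⊢
  rwa [hD.leibniz, ha_const, zero_mul, zero_add, ha.mul_right_eq_zero] at hax

theorem mem_constants_of_sq_mem (hD : IsRingDeriv D) (h2 : IsUnit (2 : A)) {w : A}
    (hw : IsUnit w) (hcomm : Commute (D w) w) (hw2 : w * w ∈ hD.constants) :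
    w ∈ hD.constants := by
  rw [mem_constants_iff] at hw2 ⊢
  rwa [hD.leibniz, hcomm.eq, ← two_mul, h2.mul_right_eq_zero, hw.mul_right_eq_zero] at hw2

end IsRingDeriv

end Constants

theorem isUnit_two_of_algebra (k : Type*) {A : Type*} [Field k] [Semiring A] [Algebra k A]
    (h2 : (2 : k) ≠ 0) : IsUnit (2 : A) := by
  rw [← map_ofNat (algebraMap k A) 2]
  exact (IsUnit.mk0 2 h2).map _

section RestrictsTo

theorem RestrictsTo.map_smul {R A : Type*} [CommRing R] [Ring A] [Algebra R A] {δ : R → R}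
    {D : A → A} (hDδ : RestrictsTo δ D) (hD : IsRingDeriv D) (r : R) (a : A) :
    D (r • a) = δ r • a + r • D a := by
  simp only [Algebra.smul_def, hD.leibniz, hDδ r]

theorem RestrictsTo.trans {R S A : Type*} [CommRing R] [CommRing S] [Ring A] [Algebra R S]
    [Algebra S A] [Algebra R A] [IsScalarTower R S A] {δR : R → R} {δS : S → S} {D : A → A}
    (hRS : RestrictsTo δR δS) (hSA : RestrictsTo δS D) : RestrictsTo δR D := fun r => by
  rw [IsScalarTower.algebraMap_apply R S A, hSA, hRS, ← IsScalarTower.algebraMap_apply]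

theorem exists_isRingDeriv_of_formallyEtale {R S : Type*} [CommRing R] [CommRing S] [Algebra R S]
    [Algebra.FormallyEtale R S] {δ : R → R} (hδ : IsRingDeriv δ) :
    ∃ δS : S → S, IsRingDeriv δS ∧ RestrictsTo δ δS := by
  let δ' : Derivation ℤ R S := Derivation.mk'
    ((Algebra.linearMap R S).toAddMonoidHom.comp hδ.toAddMonoidHom).toIntLinearMap fun a b => by
      change algebraMap R S (δ (a * b)) = a • algebraMap R S (δ b) + b • algebraMap R S (δ a)
      rw [hδ.leibniz, map_add, map_mul, map_mul, Algebra.smul_def, Algebra.smul_def]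
      ring
  let E : Derivation ℤ S S :=
    ((KaehlerDifferential.isBaseChange_of_formallyEtale ℤ R S).lift
      δ'.liftKaehlerDifferential).compDer (KaehlerDifferential.D ℤ S)
  refine ⟨E, ⟨map_add E, fun x y => ?_⟩, fun r => ?_⟩
  · rw [Derivation.leibniz, smul_eq_mul, smul_eq_mul]
    ring
  · have h := (KaehlerDifferential.isBaseChange_of_formallyEtale ℤ R S).lift_eq
      δ'.liftKaehlerDifferential (KaehlerDifferential.D ℤ R r)
    rw [KaehlerDifferential.map_D, Derivation.liftKaehlerDifferential_comp_D] at h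
    exact h

end RestrictsTo

section TensorProduct

/-- `D` is the derivation `δ ⊗ id + id ⊗ d` on `A ⊗[k] Q`, written `d*` in the paper. -/
structure IsTensorDeriv {k A Q : Type*} [CommRing k] [CommRing A] [Algebra k A] [Ring Q]
    [Algebra k Q] (δ : A → A) (d : Q → Q) (D : A ⊗[k] Q → A ⊗[k] Q) : Prop
    extends IsRingDeriv D where
  map_tmul : ∀ a x, D (a ⊗ₜ[k] x) = δ a ⊗ₜ[k] x + a ⊗ₜ[k] d x

variable {k A B Q : Type*} [CommRing k] [CommRing A] [Algebra k A] [CommRing B] [Algebra k B]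
  [Ring Q] [Algebra k Q] {δk : k → k} {δ : A → A} {δB : B → B} {d : Q → Q}
  {D : A ⊗[k] Q → A ⊗[k] Q} {E : B ⊗[k] Q → B ⊗[k] Q}

theorem IsRingDeriv.isTensorDeriv {D : A ⊗[k] Q →+ A ⊗[k] Q} (hδ : IsRingDeriv δ)
    (hd : IsRingDeriv d) (hD : ∀ a x, D (a ⊗ₜ[k] x) = δ a ⊗ₜ[k] x + a ⊗ₜ[k] d x) :
    IsTensorDeriv δ d D := by
  refine ⟨⟨_root_.map_add D, fun x y => ?_⟩, hD⟩
  induction x with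
  | zero => simp only [_root_.map_zero, zero_mul, add_zero]
  | add x₁ x₂ h₁ h₂ => simp only [add_mul, _root_.map_add, h₁, h₂]; abel
  | tmul a x =>
    induction y with
    | zero => simp only [_root_.map_zero, mul_zero, add_zero]
    | add y₁ y₂ h₁ h₂ => simp only [mul_add, _root_.map_add, h₁, h₂]; abel
    | tmul b y =>
      simp only [Algebra.TensorProduct.tmul_mul_tmul, hD, hδ.leibniz, hd.leibniz,
        TensorProduct.add_tmul, TensorProduct.tmul_add, add_mul, mul_add]
      abel

theorem exists_isTensorDeriv (hδ : IsRingDeriv δ) (hδk : RestrictsTo δk δ) (hd : IsRingDeriv d)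
    (hdk : RestrictsTo δk d) : ∃ D : A ⊗[k] Q → A ⊗[k] Q, IsTensorDeriv δ d D := by
  let f : A →+ Q →+ A ⊗[k] Q :=
    AddMonoidHom.mk' (fun a => AddMonoidHom.mk' (fun x => δ a ⊗ₜ[k] x + a ⊗ₜ[k] d x)
      fun x y => by simp only [hd.map_add, TensorProduct.tmul_add]; abel)
      fun a b => by
        ext x
        simp only [hδ.map_add, TensorProduct.add_tmul, AddMonoidHom.mk'_apply,
          AddMonoidHom.add_apply]
        abel
  have f_balanced : ∀ (r : k) (a : A) (x : Q), f (r • a) x = f a (r • x) := fun r a x => by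
    change δ (r • a) ⊗ₜ[k] x + (r • a) ⊗ₜ[k] d x = δ a ⊗ₜ[k] (r • x) + a ⊗ₜ[k] d (r • x)
    rw [hδk.map_smul hδ, hdk.map_smul hd]
    simp only [TensorProduct.add_tmul, TensorProduct.tmul_add, TensorProduct.tmul_smul,
      TensorProduct.smul_tmul']
    abel
  exact ⟨TensorProduct.liftAddHom f f_balanced, hδ.isTensorDeriv hd fun _ _ => rfl⟩

theorem IsTensorDeriv.restrictsTo (hD : IsTensorDeriv δ d D) (hd : IsRingDeriv d) :
    RestrictsTo δ D := fun a => by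
  simp only [Algebra.TensorProduct.algebraMap_apply, Algebra.algebraMap_self_apply, hD.map_tmul,
    hd.map_one, TensorProduct.tmul_zero, add_zero]

theorem IsTensorDeriv.map_baseChange [Algebra A B] [IsScalarTower k A B]
    (hD : IsTensorDeriv δ d D) (hE : IsTensorDeriv δB d E) (hδB : RestrictsTo δ δB)
    (z : A ⊗[k] Q) :
    E (Algebra.TensorProduct.map (Algebra.ofId A B) (AlgHom.id k Q) z) =
      Algebra.TensorProduct.map (Algebra.ofId A B) (AlgHom.id k Q) (D z) := by
  induction z with
  | zero => rw [hD.map_zero, map_zero, hE.map_zero]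
  | add x y hx hy => rw [hD.map_add, map_add, hE.map_add, hx, hy, map_add]
  | tmul a x =>
    simp only [Algebra.TensorProduct.map_tmul, Algebra.ofId_apply, AlgHom.coe_id, id_eq,
      hD.map_tmul, hE.map_tmul, hδB a, map_add]

end TensorProduct

section MatrixUnits

/-- A complete system of matrix units in a ring, indexed by `n × n`. -/
structure IsMatrixUnits {n A : Type*} [Fintype n] [DecidableEq n] [Ring A] (E : n → n → A) :
    Prop where
  mul_eq : ∀ i j k l, E i j * E k l = if j = k then E i l else 0
  sum_diag : ∑ i, E i i = 1

variable {n A : Type*} [Fintype n] [DecidableEq n] [Ring A] {E : n → n → A}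

theorem isMatrixUnits_mul_mul {e : A} {a b : n → A}
    (hba : ∀ i j, e * b i * a j * e = if i = j then e else 0) (hab : ∑ i, a i * e * b i = 1) :
    IsMatrixUnits fun i j => a i * e * b j where
  mul_eq i j k l := by
    calc a i * e * b j * (a k * e * b l) = a i * (e * b j * a k * e) * b l := by
          simp only [mul_assoc]
      _ = if j = k then a i * e * b l else 0 := by
          rw [hba]; split_ifs <;> simp only [mul_zero, zero_mul]
  sum_diag := hab

namespace IsMatrixUnits

/-- The algebra homomorphism from matrices sending the standard matrix units to `E`. -/
def algHom (K : Type*) [CommRing K] [Algebra K A] (hE : IsMatrixUnits E) :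
    Matrix n n K →ₐ[K] A :=
  AlgHom.ofLinearMap
    { toFun X := ∑ i, ∑ j, X i j • E i j
      map_add' X Y := by simp only [Matrix.add_apply, add_smul, Finset.sum_add_distrib]
      map_smul' c X := by
        simp only [Matrix.smul_apply, smul_assoc, Finset.smul_sum, RingHom.id_apply] }
    (by simp [Matrix.one_apply, hE.sum_diag])
    fun X Y => by
      simp only [LinearMap.coe_mk, AddHom.coe_mk, Matrix.mul_apply, Finset.sum_smul,
        Finset.sum_mul, Finset.mul_sum, smul_mul_smul_comm, hE.mul_eq, smul_ite, smul_zero,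
        Finset.sum_ite_eq', Finset.mem_univ, if_true]
      exact (Finset.sum_congr rfl fun _ _ => Finset.sum_comm).trans Finset.sum_comm_cycle.symm

theorem algHom_apply {K : Type*} [CommRing K] [Algebra K A] (hE : IsMatrixUnits E)
    (X : Matrix n n K) :
    hE.algHom K X = ∑ i, ∑ j, X i j • E i j :=
  rfl

theorem map_algHom {K : Type*} [CommRing K] [Algebra K A] {D : A → A} {δ : K → K}
    (hE : IsMatrixUnits E) (hD : IsRingDeriv D) (hDδ : RestrictsTo δ D)
    (hconst : ∀ i j, E i j ∈ hD.constants) (X : Matrix n n K) :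
    D (hE.algHom K X) = hE.algHom K (X.map δ) := by
  have hD_sum (f : n → A) : D (∑ i, f i) = ∑ i, D (f i) := map_sum hD.toAddMonoidHom f _
  have hD_entry (i j : n) : D (X i j • E i j) = δ (X i j) • E i j := by
    rw [hDδ.map_smul hD, hD.mem_constants_iff.1 (hconst i j), smul_zero, add_zero]
  simp only [algHom_apply, hD_sum, hD_entry, Matrix.map_apply]

variable {K : Type*} [Field K] [Algebra K A] [Nonempty n]

theorem algHom_bijective (hE : IsMatrixUnits E)
    (hrank : Module.finrank K A = Fintype.card n ^ 2) : Function.Bijective (hE.algHom K) := by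
  have hpos : 0 < Module.finrank K A := hrank ▸ pow_pos Fintype.card_pos 2
  have : Nontrivial A := Module.nontrivial_of_finrank_pos hpos
  have : FiniteDimensional K A := Module.finite_of_finrank_pos hpos
  have hinj : Function.Injective (hE.algHom K) := (hE.algHom K).toRingHom.injective
  refine ⟨hinj, ?_⟩
  refine (LinearMap.injective_iff_surjective_of_finrank_eq_finrank
    (f := (hE.algHom K).toLinearMap) ?_).1 hinj
  rw [hrank, Module.finrank_matrix, Module.finrank_self, mul_one, sq]

theorem exists_algEquiv_matrix {D : A → A} {δ : K → K} (hE : IsMatrixUnits E)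
    (hrank : Module.finrank K A = Fintype.card n ^ 2) (hD : IsRingDeriv D)
    (hDδ : RestrictsTo δ D) (hconst : ∀ i j, E i j ∈ hD.constants) :
    ∃ φ : A ≃ₐ[K] Matrix n n K, ∀ z, φ (D z) = (φ z).map δ := by
  let ψ := AlgEquiv.ofBijective (hE.algHom K) (hE.algHom_bijective hrank)
  refine ⟨ψ.symm, fun z => ?_⟩
  obtain ⟨X, rfl⟩ := ψ.surjective z
  rw [ψ.symm_apply_apply, AlgEquiv.symm_apply_eq]
  exact hE.map_algHom hD hDδ hconst X

end IsMatrixUnits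

theorem isMatrixUnits_of_idempotent_of_involution {e w : A} (he : e * e = e) (hw : w * w = 1)
    (hewe : e * w * e = 0) (hsum : e + w * e * w = 1) :
    IsMatrixUnits fun i j : Fin 2 => ![1, w] i * e * ![1, w] j := by
  refine isMatrixUnits_mul_mul (fun i j => ?_) ?_
  · fin_cases i <;> fin_cases j <;> simp [he, hewe, mul_assoc e w w, hw]
  · simp [hsum]

theorem exists_idempotent_of_anticommuting_involutions (h2 : IsUnit (2 : A)) {w₁ w₂ : A}
    (h₁ : w₁ * w₁ = 1) (h₂ : w₂ * w₂ = 1) (h₁₂ : w₂ * w₁ = -(w₁ * w₂)) :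
    ∃ e : A, 2 * e = 1 + w₁ ∧ e * e = e ∧ e * w₂ * e = 0 ∧ e + w₂ * e * w₂ = 1 := by
  obtain ⟨e, he⟩ : ∃ e : A, 2 * e = 1 + w₁ := ⟨h2.unit⁻¹ * (1 + w₁), h2.unit.mul_inv_cancel_left _⟩
  have cancel {x y : A} (h : 2 * x = 2 * y) : x = y := h2.mul_left_cancel h
  refine ⟨e, he, cancel (cancel ?_), cancel (cancel ?_), cancel ?_⟩
  · calc 2 * (2 * (e * e)) = (2 * e) * (2 * e) := by noncomm_ring
      _ = 1 + w₁ + w₁ + w₁ * w₁ := by rw [he]; noncomm_ring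
      _ = 2 * (2 * e) := by rw [he, h₁]; noncomm_ring
  · calc 2 * (2 * (e * w₂ * e)) = (2 * e) * w₂ * (2 * e) := by noncomm_ring
      _ = w₂ + w₁ * w₂ + w₂ * w₁ + w₁ * (w₂ * w₁) := by rw [he]; noncomm_ring
      _ = w₂ - w₁ * w₁ * w₂ := by rw [h₁₂]; noncomm_ring
      _ = 2 * (2 * 0) := by rw [h₁]; noncomm_ring
  · calc 2 * (e + w₂ * e * w₂) = 2 * e + w₂ * (2 * e) * w₂ := by noncomm_ring
      _ = 1 + w₁ + w₂ * w₂ + w₂ * w₁ * w₂ := by rw [he]; noncomm_ring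
      _ = 1 + w₁ + w₂ * w₂ - w₁ * (w₂ * w₂) := by rw [h₁₂]; noncomm_ring
      _ = 2 * 1 := by rw [h₂]; noncomm_ring

theorem IsRingDeriv.exists_algEquiv_matrix_of_anticommuting_involutions {K : Type*} [Field K]
    [Algebra K A] (hrank : Module.finrank K A = 4) (h2 : IsUnit (2 : A)) {D : A → A} {δ : K → K}
    (hD : IsRingDeriv D) (hDδ : RestrictsTo δ D) {w₁ w₂ : A} (h₁ : w₁ * w₁ = 1)
    (h₂ : w₂ * w₂ = 1) (h₁₂ : w₂ * w₁ = -(w₁ * w₂)) (hw₁ : w₁ ∈ hD.constants)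
    (hw₂ : w₂ ∈ hD.constants) :
    ∃ φ : A ≃ₐ[K] Matrix (Fin 2) (Fin 2) K, ∀ z, φ (D z) = (φ z).map δ := by
  obtain ⟨e, he, hee, hewe, hsum⟩ := exists_idempotent_of_anticommuting_involutions h2 h₁ h₂ h₁₂
  have he_const : e ∈ hD.constants :=
    hD.mem_constants_of_mul_mem h2 (ofNat_mem _ 2) (he ▸ add_mem (one_mem _) hw₁)
  have frame_const (i : Fin 2) : ![1, w₂] i ∈ hD.constants := by
    fin_cases i
    exacts [one_mem _, hw₂]
  exact (isMatrixUnits_of_idempotent_of_involution hee h₂ hewe hsum).exists_algEquiv_matrix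
    (by rw [hrank, Fintype.card_fin]; norm_num) hD hDδ
    fun i j => mul_mem (mul_mem (frame_const i) he_const) (frame_const j)

end MatrixUnits

section Standard

/-- `D` is standard with respect to the subspace `V`: there are anticommuting elements `w₁, w₂ ∈ V`
with nonzero scalar squares, each spanning a `D`-stable line. For a quaternion algebra, `V` is
the space of pure quaternions. -/
def IsStandard {L A : Type*} [Field L] [Ring A] [Algebra L A] (V : Submodule L A) (D : A → A) :
    Prop :=
  ∃ w₁ w₂ : A, w₁ ∈ V ∧ w₂ ∈ V ∧
    (∃ c : L, c ≠ 0 ∧ w₁ * w₁ = algebraMap L A c) ∧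
    (∃ c : L, c ≠ 0 ∧ w₂ * w₂ = algebraMap L A c) ∧
    w₂ * w₁ = -(w₁ * w₂) ∧
    (∃ c : L, D w₁ = c • w₁) ∧
    (∃ c : L, D w₂ = c • w₂)

theorem IsRingDeriv.exists_smul_involution_mem_constants {K A : Type*} [Field K] [Ring A]
    [Algebra K A] {D : A → A} {δ : K → K} (hD : IsRingDeriv D) (hDδ : RestrictsTo δ D)
    (h2 : IsUnit (2 : A)) {w : A} {c a : K} (hc : c ≠ 0) (hc_sq : IsSquare c)
    (hw : w * w = algebraMap K A c) (hDw : D w = a • w) :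
    ∃ s : K, (s • w) * (s • w) = 1 ∧ s • w ∈ hD.constants := by
  obtain ⟨r, rfl⟩ := hc_sq
  have hsq : (r⁻¹ • w) * (r⁻¹ • w) = 1 := by
    rw [smul_mul_smul_comm, hw, Algebra.algebraMap_eq_smul_one, smul_smul, ← mul_inv,
      inv_mul_cancel₀ hc, one_smul]
  have hcomm : Commute (D (r⁻¹ • w)) (r⁻¹ • w) := by
    rw [hDδ.map_smul hD, hDw, smul_smul, ← add_smul]
    exact ((Commute.refl w).smul_left _).smul_right _
  exact ⟨r⁻¹, hsq, hD.mem_constants_of_sq_mem h2 (isUnit_mul_self_iff.1 (hsq ▸ isUnit_one)) hcomm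
    (hsq ▸ one_mem _)⟩

theorem exists_separable_extension_isSquare {L : Type u} [Field L] (h2 : (2 : L) ≠ 0)
    {ι : Type*} [Finite ι] (c : ι → L) :
    ∃ (M : Type u) (_ : Field M) (_ : Algebra L M), FiniteDimensional L M ∧
      Algebra.IsSeparable L M ∧ ∀ i, IsSquare (algebraMap L M (c i)) := by
  have : NeZero ((2 : ℕ) : SeparableClosure L) := ⟨by
    rw [← map_natCast (algebraMap L _)]
    exact (map_ne_zero _).2 (by exact_mod_cast h2)⟩
  choose s hs using fun i =>
    IsSepClosed.exists_pow_nat_eq (algebraMap L (SeparableClosure L) (c i)) 2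
  let M := IntermediateField.adjoin L (Set.range s)
  have : FiniteDimensional L M := IntermediateField.finiteDimensional_adjoin
    fun x _ => Algebra.IsIntegral.isIntegral x
  refine ⟨M, inferInstance, inferInstance, this, inferInstance, fun i =>
    ⟨⟨s i, IntermediateField.subset_adjoin _ _ ⟨i, rfl⟩⟩, Subtype.ext ?_⟩⟩
  simpa [sq] using (hs i).symm

theorem IsTensorDeriv.exists_algEquiv_matrix_of_isSquare {k L M Q : Type*} [Field k] [Field L]
    [Field M] [Algebra k L] [Algebra k M] [Algebra L M] [IsScalarTower k L M] [Ring Q]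
    [Algebra k Q] (h2 : (2 : k) ≠ 0) (hrank : Module.finrank k Q = 4) {d : Q → Q}
    (hd : IsRingDeriv d) {δL : L → L} {δM : M → M} (hLM : RestrictsTo δL δM)
    {D : L ⊗[k] Q → L ⊗[k] Q} (hD : IsTensorDeriv δL d D)
    {E : M ⊗[k] Q → M ⊗[k] Q} (hE : IsTensorDeriv δM d E)
    {w : Fin 2 → L ⊗[k] Q} {c a : Fin 2 → L} (hc : ∀ i, c i ≠ 0)
    (hw : ∀ i, w i * w i = algebraMap L _ (c i)) (hanti : w 1 * w 0 = -(w 0 * w 1))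
    (hDw : ∀ i, D (w i) = a i • w i) (hsq : ∀ i, IsSquare (algebraMap L M (c i))) :
    ∃ φ : (M ⊗[k] Q) ≃ₐ[M] Matrix (Fin 2) (Fin 2) M, ∀ z, φ (E z) = (φ z).map δM := by
  let ι : L ⊗[k] Q →ₐ[L] M ⊗[k] Q :=
    Algebra.TensorProduct.map (Algebra.ofId L M) (AlgHom.id k Q)
  have h2' : IsUnit (2 : M ⊗[k] Q) := isUnit_two_of_algebra k h2
  have hEδ := hE.restrictsTo hd
  have hι_sq (i : Fin 2) : ι (w i) * ι (w i) = algebraMap M _ (algebraMap L M (c i)) := by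
    rw [← map_mul, hw, AlgHom.commutes, ← IsScalarTower.algebraMap_apply]
  have hι_eigen (i : Fin 2) : E (ι (w i)) = algebraMap L M (a i) • ι (w i) := by
    rw [hD.map_baseChange hE hLM, hDw, map_smul, algebraMap_smul]
  choose s hs_sq hs_const using fun i => hE.exists_smul_involution_mem_constants hEδ h2'
    ((map_ne_zero _).2 (hc i)) (hsq i) (hι_sq i) (hι_eigen i)
  refine hE.exists_algEquiv_matrix_of_anticommuting_involutions
    (by rw [Module.finrank_baseChange, hrank]) h2' hEδ (hs_sq 0) (hs_sq 1) ?_ (hs_const 0)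
    (hs_const 1)
  rw [smul_mul_smul_comm, smul_mul_smul_comm, ← map_mul, ← map_mul, hanti, map_neg, smul_neg,
    mul_comm]

theorem exists_finite_diffSplits_of_isStandard {k L : Type u} {Q : Type*} [Field k] [Field L]
    [Algebra k L] [FiniteDimensional k L] [Ring Q] [Algebra k Q] (h2 : (2 : k) ≠ 0)
    (hrank : Module.finrank k Q = 4) {δk : k → k} {d : Q → Q} (hd : IsRingDeriv d)
    (hdk : RestrictsTo δk d) {δL : L → L} (hδL : IsRingDeriv δL) (hδkL : RestrictsTo δk δL)
    {D : L ⊗[k] Q → L ⊗[k] Q} (hD : IsTensorDeriv δL d D) {V : Submodule L (L ⊗[k] Q)}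
    (hstd : IsStandard V D) :
    ∃ (M : Type u) (_ : Field M) (_ : Algebra k M) (δM : M → M),
      IsRingDeriv δM ∧ RestrictsTo δk δM ∧ FiniteDimensional k M ∧ DiffSplits k Q d M δM := by
  obtain ⟨w₁, w₂, -, -, ⟨c₁, hc₁, hw₁⟩, ⟨c₂, hc₂, hw₂⟩, hanti, ⟨a₁, hDw₁⟩, ⟨a₂, hDw₂⟩⟩ := hstd
  obtain ⟨M, _, _, _, _, hsq⟩ := exists_separable_extension_isSquare
    (isUnit_two_of_algebra k h2).ne_zero ![c₁, c₂]
  let _ : Algebra k M := Algebra.compHom M (algebraMap k L)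
  have : IsScalarTower k L M := .of_algebraMap_eq fun _ => rfl
  have : Algebra.FormallyEtale L M := .of_isSeparable L M
  obtain ⟨δM, hδM, hδLM⟩ := exists_isRingDeriv_of_formallyEtale (S := M) hδL
  have hδkM := hδkL.trans hδLM
  obtain ⟨E, hE⟩ := exists_isTensorDeriv hδM hδkM hd hdk
  refine ⟨M, _, _, δM, hδM, hδkM, .trans k L M, E, hE.toIsRingDeriv, hE.map_tmul, ?_⟩
  exact hD.exists_algEquiv_matrix_of_isSquare h2 hrank hd hδLM hE (w := ![w₁, w₂])
    (c := ![c₁, c₂]) (a := ![a₁, a₂]) (by simp [Fin.forall_fin_two, hc₁, hc₂])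
    (by simp [Fin.forall_fin_two, hw₁, hw₂]) hanti (by simp [Fin.forall_fin_two, hDw₁, hDw₂]) hsq

end Standard

section PureQuaternions

theorem trace_eq_zero_of_anticommute {n R : Type*} [Fintype n] [DecidableEq n] [CommRing R]
    (h2 : IsUnit (2 : R)) {X Y : Matrix n n R} (hY : IsUnit Y) (hYX : Y * X = -(X * Y)) :
    X.trace = 0 := by
  obtain ⟨Y, rfl⟩ := hY
  have hconj : X.trace = -X.trace := by
    calc X.trace = (Y.val * X * Y⁻¹.val).trace := (Matrix.trace_units_conj Y X).symm
      _ = -X.trace := by rw [hYX, neg_mul, Y.mul_inv_cancel_right, Matrix.trace_neg]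
  rw [← h2.mul_right_eq_zero, two_mul]
  exact eq_neg_iff_add_eq_zero.1 hconj

theorem mem_span_image_compl_of_apply_eq_zero {ι K V : Type*} [Field K] [AddCommGroup V]
    [Module K V] (b : Module.Basis ι K V) (i₀ : ι) {f : V →ₗ[K] K} (hf₀ : f (b i₀) ≠ 0)
    (hf : ∀ i ≠ i₀, f (b i) = 0) {x : V} (hx : f x = 0) :
    x ∈ Submodule.span K (b '' {i₀}ᶜ) := by
  have hf_eq : f = f (b i₀) • b.coord i₀ := b.ext fun i => by
    rcases eq_or_ne i i₀ with rfl | hi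
    · simp
    · simp [hf i hi, Finsupp.single_eq_of_ne hi.symm]
  rw [hf_eq, LinearMap.smul_apply, smul_eq_mul, mul_eq_zero_iff_left hf₀] at hx
  rw [b.mem_span_image, Set.subset_compl_singleton_iff]
  simpa using hx

theorem isStandard_of_algEquiv_matrix {L A : Type*} [Field L] [Ring A] [Algebra L A]
    {δ : L → L} (hδ : IsRingDeriv δ) {D : A → A} {V : Submodule L A}
    (φ : A ≃ₐ[L] Matrix (Fin 2) (Fin 2) L) (hφ : ∀ z, φ (D z) = (φ z).map δ)
    (hV : ∀ z, (φ z).trace = 0 → z ∈ V) : IsStandard V D := by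
  have hD_const (X : Matrix (Fin 2) (Fin 2) L) (hX : ∀ i j, X i j ∈ hδ.constants) :
      D (φ.symm X) = (0 : L) • φ.symm X := by
    apply φ.injective
    rw [hφ, φ.apply_symm_apply, zero_smul, map_zero]
    exact Matrix.ext hX
  refine ⟨φ.symm !![1, 0; 0, -1], φ.symm !![0, 1; 1, 0], hV _ ?_, hV _ ?_, ⟨1, one_ne_zero, ?_⟩,
    ⟨1, one_ne_zero, ?_⟩, ?_, ⟨0, hD_const _ ?_⟩, ⟨0, hD_const _ ?_⟩⟩
  · simp [Matrix.trace_fin_two]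
  · simp [Matrix.trace_fin_two]
  · rw [← map_mul, map_one, ← map_one φ.symm]
    simp [Matrix.one_fin_two]
  · rw [← map_mul, map_one, ← map_one φ.symm]
    simp [Matrix.one_fin_two]
  · rw [← map_mul φ.symm, ← map_mul φ.symm, ← map_neg φ.symm]
    simp
  · simp [Fin.forall_fin_two, one_mem, zero_mem]
  · simp [Fin.forall_fin_two, one_mem, zero_mem]

variable {k L Q : Type*} [Field k] [Field L] [Algebra k L] [Ring Q] [Algebra k Q] {α β : k}
  {u v : Q}

/-- The pure quaternions of `L ⊗[k] Q`, where `Q` is a quaternion algebra with generators `u, v`. -/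
def pureQuaternions (k L : Type*) {Q : Type*} [Field k] [Field L] [Algebra k L] [Ring Q]
    [Algebra k Q] (u v : Q) : Submodule L (L ⊗[k] Q) :=
  Submodule.span L {(1 : L) ⊗ₜ[k] u, (1 : L) ⊗ₜ[k] v, (1 : L) ⊗ₜ[k] (u * v)}

theorem trace_one_tmul_eq_zero_of_anticommute (h2 : (2 : k) ≠ 0)
    (φ : (L ⊗[k] Q) ≃ₐ[L] Matrix (Fin 2) (Fin 2) L) {x y : Q} (hy : IsUnit y)
    (hyx : y * x = -(x * y)) : (φ (1 ⊗ₜ x)).trace = 0 := by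
  let ψ : Q →ₐ[k] Matrix (Fin 2) (Fin 2) L :=
    (φ.toAlgHom.restrictScalars k).comp Algebra.TensorProduct.includeRight
  have hψ : ψ y * ψ x = -(ψ x * ψ y) := by rw [← map_mul, ← map_mul, ← map_neg, hyx]
  exact trace_eq_zero_of_anticommute (isUnit_two_of_algebra k h2) (hy.map ψ) hψ

theorem mem_pureQuaternions_of_trace_eq_zero (h2 : (2 : k) ≠ 0) (hα : α ≠ 0) (hβ : β ≠ 0)
    (hu : u * u = algebraMap k Q α) (hv : v * v = algebraMap k Q β) (huv : v * u = -(u * v))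
    (bQ : Module.Basis (Fin 4) k Q) (hbQ : ⇑bQ = ![1, u, v, u * v])
    (φ : (L ⊗[k] Q) ≃ₐ[L] Matrix (Fin 2) (Fin 2) L) {z : L ⊗[k] Q} (hz : (φ z).trace = 0) :
    z ∈ pureQuaternions k L u v := by
  have hu_unit : IsUnit u :=
    isUnit_mul_self_iff.1 (hu ▸ (IsUnit.mk0 α hα).map (algebraMap k Q))
  have hv_unit : IsUnit v :=
    isUnit_mul_self_iff.1 (hv ▸ (IsUnit.mk0 β hβ).map (algebraMap k Q))
  have trace_u : (φ (1 ⊗ₜ u)).trace = 0 := trace_one_tmul_eq_zero_of_anticommute h2 φ hv_unit huv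
  have trace_v : (φ (1 ⊗ₜ v)).trace = 0 :=
    trace_one_tmul_eq_zero_of_anticommute h2 φ hu_unit (by rw [huv, neg_neg])
  have trace_uv : (φ (1 ⊗ₜ (u * v))).trace = 0 :=
    trace_one_tmul_eq_zero_of_anticommute h2 φ hu_unit
      (by rw [mul_assoc u v u, huv, mul_neg, neg_neg])
  have trace_one : (φ (1 ⊗ₜ 1)).trace = 2 := by
    rw [← Algebra.TensorProduct.one_def, map_one, Matrix.trace_one, Fintype.card_fin,
      Nat.cast_ofNat]
  have h2L : (2 : L) ≠ 0 := (isUnit_two_of_algebra k h2).ne_zero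
  have hspan := mem_span_image_compl_of_apply_eq_zero (bQ.baseChange L) 0
    (f := Matrix.traceLinearMap (Fin 2) L L ∘ₗ φ.toLinearMap) (x := z)
    (by simp [hbQ, trace_one, h2L])
    (by simp [Fin.forall_fin_succ, hbQ, trace_u, trace_v, trace_uv]) hz
  refine Submodule.span_mono ?_ hspan
  rintro _ ⟨i, hi, rfl⟩
  fin_cases i <;> simp_all

end PureQuaternions

theorem stmt_19_general {k : Type u} [Field k] (h2 : (2 : k) ≠ 0) {δk : k → k} {α β : k}
    (hα : α ≠ 0) (hβ : β ≠ 0) {Q : Type*} [Ring Q] [Algebra k Q] {u v : Q}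
    (hu : u * u = algebraMap k Q α) (hv : v * v = algebraMap k Q β) (huv : v * u = -(u * v))
    (bQ : Module.Basis (Fin 4) k Q) (hbQ : ⇑bQ = ![1, u, v, u * v])
    {d : Q → Q} (hd : IsRingDeriv d) (hdk : RestrictsTo δk d) :
    (∃ (L : Type u) (_ : Field L) (_ : Algebra k L) (δL : L → L),
        IsRingDeriv δL ∧ RestrictsTo δk δL ∧ FiniteDimensional k L ∧
        ∃ D : L ⊗[k] Q → L ⊗[k] Q,
          IsRingDeriv D ∧
          (∀ (y : L) (x : Q), D (y ⊗ₜ[k] x) = δL y ⊗ₜ[k] x + y ⊗ₜ[k] d x) ∧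
          IsStandard (pureQuaternions k L u v) D) ↔
    (∃ (L : Type u) (_ : Field L) (_ : Algebra k L) (δL : L → L),
        IsRingDeriv δL ∧ RestrictsTo δk δL ∧ FiniteDimensional k L ∧
        DiffSplits k Q d L δL) := by
  constructor
  · rintro ⟨L, _, _, δL, hδL, hδkL, _, D, hD, hD_tmul, hstd⟩
    have hrank : Module.finrank k Q = 4 := by
      rw [Module.finrank_eq_card_basis bQ, Fintype.card_fin]
    exact exists_finite_diffSplits_of_isStandard h2 hrank hd hdk hδL hδkL ⟨hD, hD_tmul⟩ hstd
  · rintro ⟨L, _, _, δL, hδL, hδkL, hfin, D, hD, hD_tmul, φ, hφ⟩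
    exact ⟨L, _, _, δL, hδL, hδkL, hfin, D, hD, hD_tmul, isStandard_of_algEquiv_matrix hδL φ hφ
      fun _ => mem_pureQuaternions_of_trace_eq_zero h2 hα hβ hu hv huv bQ hbQ φ⟩

/-- A derivation `d` on the quaternion algebra `Q = (α, β)_k`
restricting to `′` on `k` becomes standard over some finite field extension of `k`
if and only if `(Q, d)` is split by some finite differential field extension of
`(k, ′)`. -/
theorem stmt_19 (k : Type u) [Field k] [CharZero k]
    (δk : k → k) (hδk : IsRingDeriv δk)
    (α β : k) (hα : α ≠ 0) (hβ : β ≠ 0)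
    (Q : Type u) [Ring Q] [Algebra k Q]
    (u v : Q) (hu : u * u = algebraMap k Q α) (hv : v * v = algebraMap k Q β)
    (huv : v * u = -(u * v))
    (bQ : Module.Basis (Fin 4) k Q) (hbQ : ⇑bQ = ![1, u, v, u * v])
    (d : Q → Q) (hd : IsRingDeriv d) (hdk : RestrictsTo δk d) :
    (∃ (L : Type u) (_ : Field L) (_ : Algebra k L) (δL : L → L),
        IsRingDeriv δL ∧ RestrictsTo δk δL ∧ FiniteDimensional k L ∧
        ∃ D : L ⊗[k] Q → L ⊗[k] Q,
          IsRingDeriv D ∧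
          (∀ (y : L) (x : Q), D (y ⊗ₜ[k] x) = δL y ⊗ₜ[k] x + y ⊗ₜ[k] d x) ∧
          ∃ w₁ w₂ : L ⊗[k] Q,
            w₁ ∈ Submodule.span L
              ({(1 : L) ⊗ₜ[k] u, (1 : L) ⊗ₜ[k] v,
                (1 : L) ⊗ₜ[k] (u * v)} : Set (L ⊗[k] Q)) ∧
            w₂ ∈ Submodule.span L
              ({(1 : L) ⊗ₜ[k] u, (1 : L) ⊗ₜ[k] v,
                (1 : L) ⊗ₜ[k] (u * v)} : Set (L ⊗[k] Q)) ∧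
            (∃ c : L, c ≠ 0 ∧ w₁ * w₁ = algebraMap L (L ⊗[k] Q) c) ∧
            (∃ c : L, c ≠ 0 ∧ w₂ * w₂ = algebraMap L (L ⊗[k] Q) c) ∧
            w₂ * w₁ = -(w₁ * w₂) ∧
            (∃ c : L, D w₁ = c • w₁) ∧
            (∃ c : L, D w₂ = c • w₂)) ↔
    (∃ (L : Type u) (_ : Field L) (_ : Algebra k L) (δL : L → L),
        IsRingDeriv δL ∧ RestrictsTo δk δL ∧ FiniteDimensional k L ∧
        DiffSplits k Q d L δL) :=
  stmt_19_general two_ne_zero hα hβ hu hv huv bQ hbQ hd hdk
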